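/- Let q be a prime power and let δ ∈ (0, 1 − 1/q²) be a constant. Then there exist constants c > 0 and c'' > 0 such that for all sufficiently large n the following holds with d − 1 = ⌊δn⌋: for every integer ℓ with 1 ≤ ℓ ≤ c''√n, the number of ℓ-tuples (u_1, …, u_ℓ) of vectors in B_q^S(2n, d−1) that are linearly independent over 𝔽_q and pairwise symplectically orthogonal (⟨u_i, u_j⟩_S = 0 for all i, j) is at least (1 − q^{−cn}) · Vol_q^S(2n, d−1)^ℓ / q^{ℓ(ℓ−1)/2}. -/

import Mathlib

open Finset
open scoped Classical

/-- Symplectic weight of a vector in `F^{2n}`, written as `Fin n → F × F`. -/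
noncomputable def sympWt {F : Type} [Zero F] [DecidableEq F] {n : ℕ} (u : Fin n → F × F) : ℕ :=
  hammingNorm u

/-- The symplectic inner product on `F^{2n}`: `⟨(a|b),(a'|b')⟩_S = ⟨a,b'⟩ - ⟨b,a'⟩`. -/
def sympInner {F : Type} [Field F] {n : ℕ} (u v : Fin n → F × F) : F :=
  ∑ i, ((u i).1 * (v i).2 - (u i).2 * (v i).1)

/-- The symplectic ball `B_q^S(2n, r)` of radius `r`. -/
noncomputable def sympBall (F : Type) [Fintype F] [Zero F] [DecidableEq F] (n r : ℕ) :
    Finset (Fin n → F × F) :=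
  Finset.univ.filter fun x => sympWt x ≤ r

/-- `Vol_q^S(2n, r) = ∑_{i=0}^{r} C(n,i)(q²-1)^i`, the volume of the symplectic ball. -/
def volS (q n r : ℕ) : ℕ :=
  ∑ i ∈ Finset.range (r + 1), n.choose i * (q ^ 2 - 1) ^ i

/-!
Expand the indicator of pairwise orthogonality of `u` in additive characters: summing over all
dual variables `M = (M_{ij})_{i<j}`, the number of orthogonal tuples times `q ^ (ℓ(ℓ-1)/2)` is
`∑ M, ∑ u, ψ (∑_{i<j} M_{ij} ⟨u_i, u_j⟩)`. The term `M = 0` is the main term. If `M_{ik} ≠ 0`,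
freezing all vectors but `u_i` and `u_k` leaves a bilinear sum
`∑ y, |∑ x, ψ ⟨x, M_{ik} y + w⟩|` over the ball, which is exponentially smaller than trivial.
Indeed, the Fourier coefficient of the ball at `z` is at most `κ ^ wt z` times its volume: every
nonzero coordinate of `z` lowers the mass of one factor of the weight enumerator, and this costs a
constant factor because the volumes of balls of consecutive radii of order `n` have bounded ratio.
The same principle shows that `κ ^ wt (a y + w)` is exponentially small on average over the ball.
Linearly dependent tuples are also exponentially rare, and the total loss `q ^ O(ℓ²)` is absorbed
as long as `ℓ ≤ c'' √n`.
-/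

open Polynomial

section WeightEnumerator

variable {R ι V : Type*} [CommSemiring R]

/-- The sum of the coefficients of `P` of degree at most `r`. For the weight enumerator of a
weighted Hamming space this is the total weight of the ball of radius `r`. -/
def coeffSum (P : R[X]) (r : ℕ) : R :=
  ∑ k ∈ range (r + 1), P.coeff k

lemma coeff_zero_linear_mul (a b : R) (P : R[X]) :
    ((C a + C b * X) * P).coeff 0 = a * P.coeff 0 := by
  simp

lemma coeff_succ_linear_mul (a b : R) (P : R[X]) (k : ℕ) :
    ((C a + C b * X) * P).coeff (k + 1) = a * P.coeff (k + 1) + b * P.coeff k := by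
  rw [add_mul, coeff_add, coeff_C_mul, mul_assoc, coeff_C_mul, coeff_X_mul]

lemma coeffSum_succ_linear_mul (a b : R) (P : R[X]) (r : ℕ) :
    coeffSum ((C a + C b * X) * P) (r + 1) = a * coeffSum P (r + 1) + b * coeffSum P r := by
  simp only [coeffSum]
  rw [sum_range_succ' _ (r + 1), sum_range_succ' (fun k ↦ P.coeff k) (r + 1)]
  simp only [coeff_succ_linear_mul, coeff_zero_linear_mul, sum_add_distrib, mul_add, mul_sum]
  ring

lemma coeff_one_add_C_mul_X_pow (Q : R) (m k : ℕ) :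
    ((C 1 + C Q * X) ^ m).coeff k = m.choose k * Q ^ k := by
  have : (C 1 + C Q * X) ^ m = ((1 + X) ^ m : R[X]).comp (C Q * X) := by simp
  rw [this, comp_C_mul_X_coeff, coeff_one_add_X_pow]

variable [Fintype ι] [Zero V] [DecidableEq V]

lemma prod_X_pow_ite_eq_X_pow_hammingNorm (x : ι → V) :
    ∏ i, (X : R[X]) ^ (if x i = 0 then 0 else 1) = X ^ hammingNorm x := by
  rw [prod_pow_eq_pow_sum, hammingNorm, card_filter]
  simp only [ne_eq, ite_not]

variable [DecidableEq ι] [Fintype V]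

lemma sum_prod_mul_X_pow_hammingNorm (α : ι → V → R) :
    ∑ x : ι → V, C (∏ i, α i (x i)) * X ^ hammingNorm x =
      ∏ i, (C (α i 0) + C (∑ y ∈ univ.erase 0, α i y) * X) := by
  have factor (i : ι) : C (α i 0) + C (∑ y ∈ univ.erase 0, α i y) * X =
      ∑ y, C (α i y) * X ^ (if y = 0 then 0 else 1) := by
    rw [← add_sum_erase _ _ (mem_univ (0 : V)), map_sum, sum_mul]
    congr 1
    · simp
    · exact sum_congr rfl fun y hy ↦ by simp [ne_of_mem_erase hy]
  simp only [factor, Fintype.prod_sum, prod_mul_distrib, prod_X_pow_ite_eq_X_pow_hammingNorm,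
    map_prod]

lemma sum_prod_hammingNorm_le (α : ι → V → R) (r : ℕ) :
    ∑ x : ι → V with hammingNorm x ≤ r, ∏ i, α i (x i) =
      coeffSum (∏ i, (C (α i 0) + C (∑ y ∈ univ.erase 0, α i y) * X)) r := by
  simp only [← sum_prod_mul_X_pow_hammingNorm, coeffSum, finsetSum_coeff, coeff_C_mul_X_pow]
  rw [sum_comm, sum_filter]
  simp

lemma card_hammingNorm_le (r : ℕ) :
    (#{x : ι → V | hammingNorm x ≤ r} : R) =
      coeffSum ((C 1 + C ((Fintype.card V - 1 : ℕ) : R) * X) ^ Fintype.card ι) r := by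
  simpa [card_erase_of_mem] using sum_prod_hammingNorm_le (fun (_ : ι) (_ : V) ↦ (1 : R)) r

end WeightEnumerator

section CoeffGrowth

variable {R : Type*} [CommRing R] [LinearOrder R]

/-- `P` has nonnegative coefficients. -/
def CoeffNonneg (P : R[X]) : Prop :=
  ∀ k, 0 ≤ P.coeff k

lemma coeffNonneg_linear {a b : R} (ha : 0 ≤ a) (hb : 0 ≤ b) : CoeffNonneg (C a + C b * X)
  | 0 => by simpa
  | 1 => by simpa
  | k + 2 => by simp

variable [IsStrictOrderedRing R]

lemma CoeffNonneg.add {P S : R[X]} (hP : CoeffNonneg P) (hS : CoeffNonneg S) :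
    CoeffNonneg (P + S) := fun k ↦ by
  simpa using add_nonneg (hP k) (hS k)

lemma CoeffNonneg.mul {P S : R[X]} (hP : CoeffNonneg P) (hS : CoeffNonneg S) :
    CoeffNonneg (P * S) := fun k ↦ by
  simpa [coeff_mul] using sum_nonneg fun p _ ↦ mul_nonneg (hP p.1) (hS p.2)

/-- `P` has nonnegative coefficients and `P' ≤ D • P` coefficientwise, that is,
`(k + 1) c_{k+1} ≤ D c_k`. -/
structure HasGrowthRate (D : R) (P : R[X]) : Prop where
  coeffNonneg : CoeffNonneg P
  derivative_le : CoeffNonneg (C D * P - derivative P)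

namespace HasGrowthRate

variable {D M a b : R} {P : R[X]}

lemma one : HasGrowthRate (0 : R) 1 where
  coeffNonneg := by simpa using coeffNonneg_linear (zero_le_one (α := R)) le_rfl
  derivative_le k := by simp

lemma linear_mul (hP : HasGrowthRate D P) (ha : 0 ≤ a) (hb : 0 ≤ b) (hM : 0 ≤ M)
    (hba : b ≤ M * a) : HasGrowthRate (D + M) ((C a + C b * X) * P) where
  coeffNonneg := (coeffNonneg_linear ha hb).mul hP.coeffNonneg
  derivative_le := by
    have leibniz : C (D + M) * ((C a + C b * X) * P) - derivative ((C a + C b * X) * P) =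
        (C a + C b * X) * (C D * P - derivative P) + (C (M * a - b) + C (M * b) * X) * P := by
      simp only [derivative_mul, derivative_add, derivative_C, derivative_X, C_add, C_sub, C_mul]
      ring
    rw [leibniz]
    exact ((coeffNonneg_linear ha hb).mul hP.derivative_le).add
      ((coeffNonneg_linear (sub_nonneg.2 hba) (mul_nonneg hM hb)).mul hP.coeffNonneg)

lemma prod_mul {ι : Type*} {s : Finset ι} {a b : ι → R} (hP : HasGrowthRate D P) (hM : 0 ≤ M)
    (ha : ∀ i ∈ s, 0 ≤ a i) (hb : ∀ i ∈ s, 0 ≤ b i) (hba : ∀ i ∈ s, b i ≤ M * a i) :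
    HasGrowthRate (D + M * #s) ((∏ i ∈ s, (C (a i) + C (b i) * X)) * P) := by
  induction s using Finset.cons_induction with
  | empty => simpa
  | cons i s hi ih =>
    simp only [forall_mem_cons] at ha hb hba
    rw [prod_cons, card_cons, mul_assoc, Nat.cast_succ, mul_add_one, ← add_assoc]
    exact (ih ha.2 hb.2 hba.2).linear_mul ha.1 hb.1 hM hba.1

lemma coeffSum_le_succ (hP : HasGrowthRate D P) (r : ℕ) : coeffSum P r ≤ coeffSum P (r + 1) := by
  simpa [coeffSum, sum_range_succ _ (r + 1)] using hP.coeffNonneg (r + 1)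

lemma coeff_succ_mul_le (hP : HasGrowthRate D P) (k : ℕ) :
    P.coeff (k + 1) * (k + 1) ≤ D * P.coeff k := by
  simpa [coeff_derivative] using hP.derivative_le k

lemma coeffSum_succ_le {L : R} {r : ℕ} (hP : HasGrowthRate D P) (hL : 0 ≤ L)
    (hD : D ≤ L * (r + 1)) : coeffSum P (r + 1) ≤ (1 + L) * coeffSum P r := by
  have coeff_succ_le : P.coeff (r + 1) ≤ L * P.coeff r := by
    refine le_of_mul_le_mul_right ?_ (by positivity : (0 : R) < r + 1)
    linarith [hP.coeff_succ_mul_le r, mul_le_mul_of_nonneg_right hD (hP.coeffNonneg r)]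
  have coeff_le : P.coeff r ≤ coeffSum P r :=
    single_le_sum (fun k _ ↦ hP.coeffNonneg k) (self_mem_range_succ r)
  calc coeffSum P (r + 1) = coeffSum P r + P.coeff (r + 1) := sum_range_succ _ _
    _ ≤ coeffSum P r + L * coeffSum P r := by gcongr; exact coeff_succ_le.trans (by gcongr)
    _ = (1 + L) * coeffSum P r := by ring

end HasGrowthRate

end CoeffGrowth

section Contraction

variable {𝕜 : Type*} [Field 𝕜] [LinearOrder 𝕜] [IsStrictOrderedRing 𝕜] {D L M Q : 𝕜} {r : ℕ}

/- With `s = coeffSum P r` and `t = coeffSum P (r + 1)`, passing from the factor `1 + Q X` to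
`a + b X` loses `(1 - a) t + (Q - b) s ≥ (1 + Q - (a + b)) s`, while `t + Q s ≤ (1 + L + Q) s`. -/
lemma HasGrowthRate.coeffSum_linear_mul_le {a b : 𝕜} {P : 𝕜[X]} (hP : HasGrowthRate D P)
    (hL : 0 ≤ L) (hD : D ≤ L * (r + 1)) (hQ : 0 ≤ Q) (ha : a ≤ 1) (hab : a + b ≤ 1 + Q) :
    coeffSum ((C a + C b * X) * P) (r + 1) ≤
      (1 - (1 + Q - (a + b)) / (1 + L + Q)) * coeffSum ((C 1 + C Q * X) * P) (r + 1) := by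
  simp only [coeffSum_succ_linear_mul, one_mul]
  set s := coeffSum P r
  set t := coeffSum P (r + 1)
  have s_le_t : s ≤ t := hP.coeffSum_le_succ r
  have t_le : t ≤ (1 + L) * s := hP.coeffSum_succ_le hL hD
  have loss : (1 + Q - (a + b)) / (1 + L + Q) * (t + Q * s) ≤ (1 - a) * t + (Q - b) * s :=
    calc (1 + Q - (a + b)) / (1 + L + Q) * (t + Q * s)
        ≤ (1 + Q - (a + b)) / (1 + L + Q) * ((1 + L + Q) * s) := by
          gcongr
          linarith
      _ = (1 - a) * s + (Q - b) * s := by field_simp; ring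
      _ ≤ (1 - a) * t + (Q - b) * s := by gcongr
  linarith

lemma coeffSum_prod_linear_mul_le {ι : Type*} {s : Finset ι} {a b : ι → 𝕜} (hQ : 0 ≤ Q)
    (hQM : Q ≤ M) (hL : 0 ≤ L) (ha₀ : ∀ i ∈ s, 0 ≤ a i) (ha₁ : ∀ i ∈ s, a i ≤ 1)
    (hb : ∀ i ∈ s, 0 ≤ b i) (hba : ∀ i ∈ s, b i ≤ M * a i) (hab : ∀ i ∈ s, a i + b i ≤ 1 + Q)
    (m : ℕ) (hm : M * (#s + m) ≤ L * (r + 1)) :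
    coeffSum ((∏ i ∈ s, (C (a i) + C (b i) * X)) * (C 1 + C Q * X) ^ m) (r + 1) ≤
      (∏ i ∈ s, (1 - (1 + Q - (a i + b i)) / (1 + L + Q))) *
        coeffSum ((C 1 + C Q * X) ^ (#s + m)) (r + 1) := by
  have hM : 0 ≤ M := hQ.trans hQM
  induction s using Finset.cons_induction generalizing m with
  | empty => simp
  | cons i s hi ih =>
    simp only [forall_mem_cons] at ha₀ ha₁ hb hba hab
    simp only [prod_cons, card_cons, Nat.cast_succ] at hm ⊢
    set A := ∏ i ∈ s, (C (a i) + C (b i) * X)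
    have pow_growth : HasGrowthRate (M * m) ((C 1 + C Q * X) ^ m : 𝕜[X]) := by
      simpa using HasGrowthRate.one.prod_mul (s := range m) hM (fun _ _ ↦ zero_le_one)
        (fun _ _ ↦ hQ) (fun _ _ ↦ by simpa)
    have rest_growth := pow_growth.prod_mul hM ha₀.2 hb.2 hba.2
    have factor_nonneg : 0 ≤ 1 - (1 + Q - (a i + b i)) / (1 + L + Q) := by
      rw [sub_nonneg, div_le_one (by positivity)]
      linarith [ha₀.1, hb.1]
    calc coeffSum ((C (a i) + C (b i) * X) * A * (C 1 + C Q * X) ^ m) (r + 1)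
        ≤ (1 - (1 + Q - (a i + b i)) / (1 + L + Q)) *
            coeffSum (A * (C 1 + C Q * X) ^ (m + 1)) (r + 1) := by
          rw [mul_assoc, pow_succ', mul_left_comm A]
          exact rest_growth.coeffSum_linear_mul_le hL (by linarith) hQ ha₁.1 hab.1
      _ ≤ _ := by
          rw [mul_assoc, add_right_comm #s 1 m, add_assoc #s]
          exact mul_le_mul_of_nonneg_left
            (ih ha₀.2 ha₁.2 hb.2 hba.2 hab.2 (m + 1) (by push_cast; linarith)) factor_nonneg

lemma coeffSum_prod_linear_le {ι : Type*} [Fintype ι] {a b : ι → 𝕜} (hQ : 0 ≤ Q)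
    (hQM : Q ≤ M) (hL : 0 ≤ L) (ha₀ : ∀ i, 0 ≤ a i) (ha₁ : ∀ i, a i ≤ 1)
    (hb : ∀ i, 0 ≤ b i) (hba : ∀ i, b i ≤ M * a i) (hab : ∀ i, a i + b i ≤ 1 + Q)
    (hm : M * Fintype.card ι ≤ L * (r + 1)) :
    coeffSum (∏ i, (C (a i) + C (b i) * X)) (r + 1) ≤
      (∏ i, (1 - (1 + Q - (a i + b i)) / (1 + L + Q))) *
        coeffSum ((C 1 + C Q * X) ^ Fintype.card ι) (r + 1) := by
  simpa using coeffSum_prod_linear_mul_le hQ hQM hL (fun i _ ↦ ha₀ i) (fun i _ ↦ ha₁ i)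
    (fun i _ ↦ hb i) (fun i _ ↦ hba i) (fun i _ ↦ hab i) 0 (s := univ) (by simpa using hm)

end Contraction

section HammingBall

variable {ι V : Type*}

lemma norm_coeff_prod_linear_le {R : Type*} [NormedCommRing R] [NormOneClass R] (s : Finset ι)
    (a b : ι → R) (k : ℕ) :
    ‖(∏ i ∈ s, (C (a i) + C (b i) * X)).coeff k‖ ≤
      (∏ i ∈ s, (C ‖a i‖ + C ‖b i‖ * X)).coeff k := by
  induction s using Finset.cons_induction generalizing k with
  | empty => rcases k with _ | k <;> simp [coeff_one]
  | cons i s hi ih =>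
    rw [prod_cons, prod_cons]
    cases k with
    | zero =>
      rw [coeff_zero_linear_mul, coeff_zero_linear_mul]
      exact (norm_mul_le _ _).trans (by gcongr; exact ih 0)
    | succ k =>
      rw [coeff_succ_linear_mul, coeff_succ_linear_mul]
      refine (norm_add_le _ _).trans (add_le_add ?_ ?_)
      · exact (norm_mul_le _ _).trans (by gcongr; exact ih (k + 1))
      · exact (norm_mul_le _ _).trans (by gcongr; exact ih k)

variable [Fintype ι] [Zero V] [DecidableEq V]

lemma prod_ite_eq_zero_eq_pow_hammingNorm {R : Type*} [CommMonoid R] (κ : R) (z : ι → V) :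
    ∏ i, (if z i = 0 then 1 else κ) = κ ^ hammingNorm z := by
  rw [prod_ite, prod_const_one, one_mul, prod_const, hammingNorm]

variable [Fintype V]

lemma sum_ite_perm_eq_zero {R : Type*} [CommRing R] (σ : Equiv.Perm V) (κ : R) :
    ∑ y, (if σ y = 0 then 1 else κ) = 1 + (Fintype.card V - 1) * κ := by
  rw [Equiv.sum_comp σ (fun z ↦ if z = 0 then 1 else κ), ← add_sum_erase _ _ (mem_univ (0 : V)),
    if_pos rfl, sum_congr rfl fun y hy ↦ if_neg (ne_of_mem_erase hy), sum_const,
    card_erase_of_mem (mem_univ _), card_univ, nsmul_eq_mul, Nat.cast_pred (Fintype.card_pos)]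

variable [DecidableEq ι]

lemma sum_pow_hammingNorm_perm_le (hV : 2 ≤ Fintype.card V) {L κ : ℝ} {r : ℕ}
    (hκ : 1 / 2 ≤ κ) (hκ₁ : κ ≤ 1) (hL : 0 ≤ L)
    (hr : 2 * (Fintype.card V - 1) * Fintype.card ι ≤ L * (r + 1)) (σ : ι → Equiv.Perm V) :
    ∑ x : ι → V with hammingNorm x ≤ r + 1, κ ^ hammingNorm (fun i ↦ σ i (x i)) ≤
      (1 - (Fintype.card V - 1) * (1 - κ) / (L + Fintype.card V)) ^ Fintype.card ι *
        #{x : ι → V | hammingNorm x ≤ r + 1} := by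
  set α : ι → V → ℝ := fun i y ↦ if σ i y = 0 then 1 else κ
  set Q : ℝ := Fintype.card V - 1 with hQ
  have one_le_Q : 1 ≤ Q := by
    have : (2 : ℝ) ≤ Fintype.card V := mod_cast hV
    linarith
  have mass (i : ι) : α i 0 + ∑ y ∈ univ.erase 0, α i y = 1 + Q * κ := by
    rw [add_sum_erase _ _ (mem_univ _), sum_ite_perm_eq_zero]
  have κ_le (i : ι) (y : V) : κ ≤ α i y := by
    dsimp only [α]; split_ifs <;> linarith
  have le_one (i : ι) (y : V) : α i y ≤ 1 := by
    dsimp only [α]; split_ifs <;> linarith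
  have nonneg (i : ι) (y : V) : 0 ≤ α i y := by linarith [κ_le i y]
  have bound := coeffSum_prod_linear_le (Q := Q) (M := 2 * Q) (by linarith) (by linarith) hL
    (fun i ↦ nonneg i 0) (fun i ↦ le_one i 0) (fun i ↦ sum_nonneg fun y _ ↦ nonneg i y)
    (fun i ↦ by nlinarith [mass i, κ_le i 0]) (fun i ↦ by nlinarith [mass i]) hr
  simp only [← sum_prod_hammingNorm_le, mass, prod_const, card_univ] at bound
  calc ∑ x : ι → V with hammingNorm x ≤ r + 1, κ ^ hammingNorm (fun i ↦ σ i (x i))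
      = ∑ x : ι → V with hammingNorm x ≤ r + 1, ∏ i, α i (x i) :=
        sum_congr rfl fun x _ ↦ (prod_ite_eq_zero_eq_pow_hammingNorm κ _).symm
    _ ≤ _ := bound
    _ = _ := by
      rw [card_hammingNorm_le, Nat.cast_pred Fintype.card_pos, ← hQ]
      congr 3
      rw [hQ]
      ring

end HammingBall

lemma addChar_sum_eq_prod {A M ι : Type*} [AddCommMonoid A] [CommMonoid M] (ψ : AddChar A M)
    (s : Finset ι) (f : ι → A) : ψ (∑ i ∈ s, f i) = ∏ i ∈ s, ψ (f i) :=
  map_prod ψ.toMonoidHom (fun i ↦ Multiplicative.ofAdd (f i)) s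

section SympBall

variable {F : Type} [Field F] [Fintype F] [DecidableEq F] {ψ : AddChar F ℂ} {n r : ℕ} {L : ℝ}

lemma card_sympBall_eq_coeffSum (R : Type*) [CommSemiring R] (n r : ℕ) :
    (#(sympBall F n r) : R) =
      coeffSum ((C 1 + C ((Fintype.card F ^ 2 - 1 : ℕ) : R) * X) ^ n) r := by
  have h := card_hammingNorm_le (R := R) (ι := Fin n) (V := F × F) r
  rw [Fintype.card_prod, Fintype.card_fin, ← sq] at h
  exact h

lemma card_sympBall (n r : ℕ) : #(sympBall F n r) = volS (Fintype.card F) n r := by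
  simpa only [volS, coeffSum, coeff_one_add_C_mul_X_pow, Nat.cast_id] using
    card_sympBall_eq_coeffSum ℕ n r

lemma sum_sympBall_addChar_eq_coeffSum (ψ : AddChar F ℂ) (r : ℕ) (z : Fin n → F × F) :
    ∑ x ∈ sympBall F n r, ψ (sympInner x z) =
      coeffSum (∏ i, (C 1 + C (∑ y ∈ univ.erase (0 : F × F),
        ψ (y.1 * (z i).2 - y.2 * (z i).1)) * X)) r := by
  have h := sum_prod_hammingNorm_le (fun i (y : F × F) ↦ ψ (y.1 * (z i).2 - y.2 * (z i).1)) r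
  simp only [← addChar_sum_eq_prod, Prod.fst_zero, Prod.snd_zero, zero_mul, sub_zero,
    AddChar.map_zero_eq_one] at h
  exact h

lemma sum_addChar_symplectic_plane (hψ : ψ.IsPrimitive) (z : F × F) :
    ∑ y : F × F, ψ (y.1 * z.2 - y.2 * z.1) = if z = 0 then (Fintype.card F : ℂ) ^ 2 else 0 := by
  have split (y : F × F) : ψ (y.1 * z.2 - y.2 * z.1) = ψ (y.1 * z.2) * ψ (y.2 * -z.1) := by
    rw [← AddChar.map_add_eq_mul]; ring_nf
  simp only [split, Fintype.sum_prod_type, ← mul_sum, ← sum_mul, AddChar.sum_mulShift _ hψ,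
    neg_eq_zero]
  by_cases h₁ : z.1 = 0 <;> by_cases h₂ : z.2 = 0 <;> simp [h₁, h₂, Prod.ext_iff, sq]

lemma norm_sum_erase_addChar_symplectic_plane (hψ : ψ.IsPrimitive) (z : F × F) :
    ‖∑ y ∈ univ.erase (0 : F × F), ψ (y.1 * z.2 - y.2 * z.1)‖ =
      if z = 0 then (Fintype.card F : ℝ) ^ 2 - 1 else 1 := by
  have one_le_card : (1 : ℝ) ≤ (Fintype.card F : ℝ) ^ 2 :=
    one_le_pow₀ (mod_cast Fintype.card_pos)
  rw [sum_erase_eq_sub (mem_univ _), sum_addChar_symplectic_plane hψ]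
  split_ifs
  · simpa using Complex.norm_of_nonneg (sub_nonneg.2 one_le_card)
  · simp

lemma norm_sum_sympBall_addChar_le (hψ : ψ.IsPrimitive) (hL : 0 ≤ L)
    (hr : ((Fintype.card F : ℝ) ^ 2 - 1) * n ≤ L * (r + 1)) (z : Fin n → F × F) :
    ‖∑ x ∈ sympBall F n (r + 1), ψ (sympInner x z)‖ ≤
      (1 - ((Fintype.card F : ℝ) ^ 2 - 2) / (L + (Fintype.card F : ℝ) ^ 2)) ^ hammingNorm z *
        #(sympBall F n (r + 1)) := by
  set Q : ℝ := (Fintype.card F : ℝ) ^ 2 - 1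
  have one_le_Q : 1 ≤ Q := by
    have : (2 : ℝ) ≤ Fintype.card F := mod_cast Fintype.one_lt_card
    nlinarith
  set b : Fin n → ℝ := fun i ↦ if z i = 0 then Q else 1
  have b_bounds (i : Fin n) : 0 ≤ b i ∧ b i ≤ Q := by
    dsimp only [b]; split_ifs <;> constructor <;> linarith
  have card_ball : (#(sympBall F n (r + 1)) : ℝ) = coeffSum ((C 1 + C Q * X) ^ n) (r + 1) := by
    rw [card_sympBall_eq_coeffSum, Nat.cast_pred (by positivity), Nat.cast_pow]
  calc ‖∑ x ∈ sympBall F n (r + 1), ψ (sympInner x z)‖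
    _ ≤ coeffSum (∏ i, (C 1 + C (b i) * X)) (r + 1) := by
        rw [sum_sympBall_addChar_eq_coeffSum]
        refine (norm_sum_le _ _).trans (sum_le_sum fun k _ ↦ ?_)
        simpa only [norm_one, norm_sum_erase_addChar_symplectic_plane hψ] using
          norm_coeff_prod_linear_le univ (fun _ ↦ (1 : ℂ)) (fun i ↦ ∑ y ∈ univ.erase (0 : F × F),
            ψ (y.1 * (z i).2 - y.2 * (z i).1)) k
    _ ≤ (∏ i, (1 - (1 + Q - (1 + b i)) / (1 + L + Q))) *
          coeffSum ((C 1 + C Q * X) ^ Fintype.card (Fin n)) (r + 1) :=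
        coeffSum_prod_linear_le (by linarith) le_rfl hL (fun _ ↦ zero_le_one) (fun _ ↦ le_rfl)
          (fun i ↦ (b_bounds i).1) (fun i ↦ by simpa using (b_bounds i).2)
          (fun i ↦ by linarith [b_bounds i]) (by simpa using hr)
    _ = _ := by
        rw [Fintype.card_fin, card_ball, ← prod_ite_eq_zero_eq_pow_hammingNorm]
        congr 1
        refine prod_congr rfl fun i _ ↦ ?_
        dsimp only [b]
        split_ifs
        · simp
        · congr 2 <;> linarith

lemma sum_norm_sum_sympBall_addChar_le (hψ : ψ.IsPrimitive) (hL : (Fintype.card F : ℝ) ^ 2 ≤ L)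
    (hr : 2 * ((Fintype.card F : ℝ) ^ 2 - 1) * n ≤ L * (r + 1)) {a : F} (ha : a ≠ 0)
    (w : Fin n → F × F) :
    ∑ y ∈ sympBall F n (r + 1), ‖∑ x ∈ sympBall F n (r + 1), ψ (sympInner x (a • y + w))‖ ≤
      (1 - ((Fintype.card F : ℝ) ^ 2 - 1) * ((Fintype.card F : ℝ) ^ 2 - 2) /
          (L + (Fintype.card F : ℝ) ^ 2) ^ 2) ^ n * (#(sympBall F n (r + 1)) : ℝ) ^ 2 := by
  set q : ℝ := (Fintype.card F : ℝ)
  set κ : ℝ := 1 - (q ^ 2 - 2) / (L + q ^ 2) with hκ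
  have two_le_card : 2 ≤ Fintype.card F := Fintype.one_lt_card
  have four_le_q_sq : 4 ≤ q ^ 2 := by
    have : (2 : ℝ) ≤ q := Nat.cast_le.2 two_le_card
    nlinarith
  have κ_ge : 1 / 2 ≤ κ := by
    have : (q ^ 2 - 2) / (L + q ^ 2) ≤ 1 / 2 := by
      rw [div_le_div_iff₀ (by linarith) two_pos]; linarith
    linarith
  have κ_le : κ ≤ 1 := sub_le_self _ (div_nonneg (by linarith) (by linarith))
  let σ (i : Fin n) : Equiv.Perm (F × F) :=
    (MulAction.toPerm (Units.mk0 a ha)).trans (Equiv.addRight (w i))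
  have average := sum_pow_hammingNorm_perm_le (V := F × F) (L := L) (r := r)
    (by rw [Fintype.card_prod]; nlinarith) κ_ge κ_le (by linarith)
    (by rw [Fintype.card_prod, Fintype.card_fin, Nat.cast_mul, ← sq]; exact hr) σ
  rw [Fintype.card_prod, Fintype.card_fin, Nat.cast_mul, ← sq] at average
  calc ∑ y ∈ sympBall F n (r + 1), ‖∑ x ∈ sympBall F n (r + 1), ψ (sympInner x (a • y + w))‖
      ≤ ∑ y ∈ sympBall F n (r + 1), κ ^ hammingNorm (a • y + w) * #(sympBall F n (r + 1)) :=
        sum_le_sum fun y _ ↦ norm_sum_sympBall_addChar_le hψ (by linarith) (by nlinarith) _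
    _ = (∑ y ∈ sympBall F n (r + 1), κ ^ hammingNorm (a • y + w)) * #(sympBall F n (r + 1)) :=
        (sum_mul ..).symm
    _ ≤ ((1 - (q ^ 2 - 1) * (1 - κ) / (L + q ^ 2)) ^ n * #(sympBall F n (r + 1))) *
          #(sympBall F n (r + 1)) := by
        gcongr
        exact average
    _ = _ := by
        rw [mul_assoc, ← sq, hκ, sub_sub_cancel, mul_div_assoc', div_div, ← sq]

end SympBall

section Resampling

variable {ι V : Type*} [Fintype ι] [DecidableEq ι] (B : Finset V)

lemma sum_piFinset_sum_update {A : Type*} [AddCommMonoid A] (i : ι) (f : (ι → V) → A) :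
    ∑ u ∈ Fintype.piFinset fun _ ↦ B, ∑ x ∈ B, f (Function.update u i x) =
      #B • ∑ u ∈ Fintype.piFinset fun _ ↦ B, f u := by
  simp only [smul_sum, ← sum_const, ← sum_product']
  refine sum_nbij' (fun p ↦ (Function.update p.1 i p.2, p.1 i))
    (fun p ↦ (Function.update p.1 i p.2, p.1 i)) ?_ ?_ ?_ ?_ ?_
  all_goals simp +contextual [Fintype.mem_piFinset, Function.update_apply, apply_ite]

variable {F : Type*} [Field F] [AddCommGroup V] [Module F V]

lemma card_filter_sum_smul_eq_zero_mul_card_le {g : ι → F} (hg : g ≠ 0) :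
    #{u ∈ Fintype.piFinset fun _ : ι ↦ B | ∑ i, g i • u i = 0} * #B ≤ #B ^ Fintype.card ι := by
  obtain ⟨i, hi⟩ := Function.ne_iff.1 hg
  have solution_unique (u : ι → V) : #{x ∈ B | ∑ j, g j • Function.update u i x j = 0} ≤ 1 := by
    refine card_le_one.2 fun x hx y hy ↦ smul_right_injective V hi ?_
    have expand (x : V) : ∑ j, g j • Function.update u i x j =
        g i • x + ∑ j ∈ univ.erase i, g j • u j := by
      rw [← add_sum_erase _ _ (mem_univ i), Function.update_self]
      congr 1
      exact sum_congr rfl fun j hj ↦ by rw [Function.update_of_ne (ne_of_mem_erase hj)]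
    simp only [mem_filter, expand] at hx hy
    exact add_right_cancel (hx.2.trans hy.2.symm)
  calc #{u ∈ Fintype.piFinset fun _ : ι ↦ B | ∑ i, g i • u i = 0} * #B
      = ∑ u ∈ Fintype.piFinset fun _ : ι ↦ B,
          #{x ∈ B | ∑ j, g j • Function.update u i x j = 0} := by
        simp only [card_filter]
        rw [sum_piFinset_sum_update B i fun u ↦ if ∑ j, g j • u j = 0 then 1 else 0, smul_eq_mul,
          mul_comm]
    _ ≤ ∑ u ∈ Fintype.piFinset fun _ : ι ↦ B, 1 := sum_le_sum fun u _ ↦ solution_unique u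
    _ = #B ^ Fintype.card ι := by simp

lemma card_filter_not_linearIndependent_mul_card_le [Fintype F] :
    #{u ∈ Fintype.piFinset fun _ : ι ↦ B | ¬LinearIndependent F u} * #B ≤
      Fintype.card F ^ Fintype.card ι * #B ^ Fintype.card ι := by
  have subset : {u ∈ Fintype.piFinset fun _ : ι ↦ B | ¬LinearIndependent F u} ⊆
      ({g | g ≠ 0} : Finset (ι → F)).biUnion fun g ↦
        {u ∈ Fintype.piFinset fun _ ↦ B | ∑ i, g i • u i = 0} := by
    intro u hu
    rw [mem_filter, Fintype.not_linearIndependent_iff] at hu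
    obtain ⟨hu, g, relation, hg⟩ := hu
    simp only [mem_biUnion, mem_filter, mem_univ, true_and]
    exact ⟨g, Function.ne_iff.2 hg, hu, relation⟩
  calc #{u ∈ Fintype.piFinset fun _ : ι ↦ B | ¬LinearIndependent F u} * #B
      ≤ (∑ g : ι → F with g ≠ 0, #{u ∈ Fintype.piFinset fun _ ↦ B | ∑ i, g i • u i = 0}) * #B :=
        Nat.mul_le_mul_right _ ((card_le_card subset).trans card_biUnion_le)
    _ ≤ ∑ g : ι → F with g ≠ 0, #B ^ Fintype.card ι := by
        rw [sum_mul]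
        exact sum_le_sum fun g hg ↦
          card_filter_sum_smul_eq_zero_mul_card_le B (mem_filter.1 hg).2
    _ ≤ ∑ _g : ι → F, #B ^ Fintype.card ι := sum_le_sum_of_subset (filter_subset _ _)
    _ = _ := by simp

end Resampling

section OrthogonalTuples

/-- The pairs `(i, j)` with `i < j`, indexing the orthogonality conditions on a tuple. -/
abbrev OrderedPair (ι : Type*) [LT ι] : Type _ :=
  {p : ι × ι // p.1 < p.2}

variable {F V ι : Type*} [Field F] [AddCommGroup V] [Module F V] [LinearOrder ι]
  {ω : LinearMap.BilinForm F V}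

lemma card_orderedPair [Fintype ι] : Fintype.card (OrderedPair ι) = (Fintype.card ι).choose 2 := by
  rw [Fintype.card_subtype, ← card_univ, ← card_product_filter_lt, univ_product_univ]

lemma forall_apply_eq_zero_iff (hω : ω.IsAlt) (u : ι → V) :
    (∀ i j, ω (u i) (u j) = 0) ↔ (fun p : OrderedPair ι ↦ ω (u p.1.1) (u p.1.2)) = 0 := by
  refine ⟨fun h ↦ funext fun p ↦ h _ _, fun h i j ↦ ?_⟩
  rcases lt_trichotomy i j with hij | rfl | hji
  · exact congrFun h ⟨(i, j), hij⟩
  · exact hω.self_eq_zero _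
  · rw [← hω.neg_eq, congrFun h ⟨(j, i), hji⟩, Pi.zero_apply, neg_zero]

lemma exists_apply_update_eq (hω : ω.IsAlt) (u : ι → V) (e p : OrderedPair ι) :
    ∃ w : V, ∃ g : V → F, ∀ x y,
      ω (Function.update (Function.update u e.1.2 y) e.1.1 x p.1.1)
          (Function.update (Function.update u e.1.2 y) e.1.1 x p.1.2) =
        ω x ((if p = e then y else 0) + w) + g y := by
  obtain ⟨⟨i, k⟩, hik⟩ := e
  obtain ⟨⟨j, l⟩, hjl⟩ := p
  dsimp only at hik hjl ⊢
  by_cases hj : j = i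
  · subst hj
    by_cases hl : l = k
    · subst hl
      exact ⟨0, 0, fun x y ↦ by simp [hjl.ne']⟩
    · exact ⟨u l, 0, fun x y ↦ by simp [hjl.ne', hl]⟩
  · by_cases hl : l = i
    · subst hl
      exact ⟨-u j, 0, fun x y ↦ by simp [hj, (hjl.trans hik).ne, hω.neg_eq]⟩
    · exact ⟨0, fun y ↦ ω (Function.update u k y j) (Function.update u k y l),
        fun x y ↦ by simp [hj, hl]⟩

variable [Fintype ι]

/-- The exponent of the character expansion of the orthogonality indicator of the tuple `u` at
the dual variable `M`. -/
def phase (ω : LinearMap.BilinForm F V) (M : OrderedPair ι → F) (u : ι → V) : F :=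
  M ⬝ᵥ fun p ↦ ω (u p.1.1) (u p.1.2)

lemma exists_phase_update_eq (hω : ω.IsAlt) (M : OrderedPair ι → F) (u : ι → V)
    (e : OrderedPair ι) :
    ∃ w : V, ∃ g : V → F, ∀ x y,
      phase ω M (Function.update (Function.update u e.1.2 y) e.1.1 x) =
        ω x (M e • y + w) + g y := by
  choose w g h using exists_apply_update_eq hω u e
  refine ⟨∑ p, M p • w p, fun y ↦ ∑ p, M p * g p y, fun x y ↦ ?_⟩
  simp [phase, dotProduct, h, mul_add, sum_add_distrib, apply_ite (ω x)]

/-- Equidistribution of `B` with respect to `ω`: its bilinear exponential sums of nonzero frequency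
and arbitrary shift are at most `T` times the trivial bound `#B ^ 2`. -/
def BilinearSumBound (ω : LinearMap.BilinForm F V) (ψ : AddChar F ℂ) (B : Finset V) (T : ℝ) :
    Prop :=
  ∀ a : F, a ≠ 0 → ∀ w : V, ∑ y ∈ B, ‖∑ x ∈ B, ψ (ω x (a • y + w))‖ ≤ T * (#B : ℝ) ^ 2

variable {ψ : AddChar F ℂ} {B : Finset V} {T : ℝ}

lemma BilinearSumBound.one_le_mul_card (h : BilinearSumBound ω ψ B T) (hB : B.Nonempty) :
    1 ≤ T * #B := by
  obtain ⟨y, hy⟩ := hB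
  have card_pos : (0 : ℝ) < #B := mod_cast card_pos.2 ⟨y, hy⟩
  have card_le : (#B : ℝ) ≤ T * (#B : ℝ) ^ 2 :=
    calc (#B : ℝ) = ‖∑ x ∈ B, ψ (ω x ((1 : F) • y + -y))‖ := by simp
      _ ≤ ∑ y' ∈ B, ‖∑ x ∈ B, ψ (ω x ((1 : F) • y' + -y))‖ :=
        single_le_sum (f := fun y' ↦ ‖∑ x ∈ B, ψ (ω x ((1 : F) • y' + -y))‖)
          (fun _ _ ↦ norm_nonneg _) hy
      _ ≤ T * (#B : ℝ) ^ 2 := h 1 one_ne_zero (-y)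
  nlinarith

lemma BilinearSumBound.nonneg (h : BilinearSumBound ω ψ B T) (hB : B.Nonempty) : 0 ≤ T :=
  (pos_of_mul_pos_left (one_pos.trans_le (h.one_le_mul_card hB)) (Nat.cast_nonneg _)).le

lemma BilinearSumBound.norm_sum_addChar_phase_le [Finite F] (h : BilinearSumBound ω ψ B T)
    (hB : B.Nonempty) (hω : ω.IsAlt) {M : OrderedPair ι → F} (hM : M ≠ 0) :
    ‖∑ u ∈ Fintype.piFinset fun _ ↦ B, ψ (phase ω M u)‖ ≤ T * (#B : ℝ) ^ Fintype.card ι := by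
  obtain ⟨e, he⟩ := Function.ne_iff.1 hM
  have card_pos : (0 : ℝ) < #B := mod_cast hB.card_pos
  have inner_bound (u : ι → V) : ‖∑ y ∈ B, ∑ x ∈ B,
      ψ (phase ω M (Function.update (Function.update u e.1.2 y) e.1.1 x))‖ ≤
        T * (#B : ℝ) ^ 2 := by
    obtain ⟨w, g, hwg⟩ := exists_phase_update_eq hω M u e
    refine (norm_sum_le _ _).trans ?_
    simpa only [hwg, AddChar.map_add_eq_mul _ (ω _ _) (g _), ← sum_mul, norm_mul,
      AddChar.norm_apply, mul_one] using h (M e) he w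
  refine le_of_mul_le_mul_left ?_ (pow_pos card_pos 2)
  calc (#B : ℝ) ^ 2 * ‖∑ u ∈ Fintype.piFinset fun _ ↦ B, ψ (phase ω M u)‖
      = ‖∑ u ∈ Fintype.piFinset fun _ ↦ B, ∑ y ∈ B, ∑ x ∈ B,
          ψ (phase ω M (Function.update (Function.update u e.1.2 y) e.1.1 x))‖ := by
        rw [sum_piFinset_sum_update B e.1.2 fun u ↦
            ∑ x ∈ B, ψ (phase ω M (Function.update u e.1.1 x)),
          sum_piFinset_sum_update B e.1.1 fun u ↦ ψ (phase ω M u), smul_smul, ← sq,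
          nsmul_eq_mul, norm_mul, Nat.cast_pow, norm_pow, Complex.norm_natCast]
    _ ≤ ∑ _u ∈ Fintype.piFinset fun _ : ι ↦ B, T * (#B : ℝ) ^ 2 :=
        (norm_sum_le _ _).trans (sum_le_sum fun _ _ ↦ inner_bound _)
    _ = (#B : ℝ) ^ 2 * (T * (#B : ℝ) ^ Fintype.card ι) := by
        rw [sum_const, Fintype.card_piFinset, prod_const, card_univ, nsmul_eq_mul, Nat.cast_pow]
        ring

variable [Fintype F]

lemma sum_addChar_dotProduct_eq_ite {P : Type*} [Fintype P] [DecidableEq P] (hψ : ψ.IsPrimitive)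
    (v : P → F) :
    ∑ M : P → F, ψ (M ⬝ᵥ v) = if v = 0 then (Fintype.card F : ℂ) ^ Fintype.card P else 0 := by
  simp only [dotProduct, addChar_sum_eq_prod]
  rw [← Fintype.prod_sum fun p m ↦ ψ (m * v p)]
  simp only [AddChar.sum_mulShift _ hψ, Nat.cast_ite, Nat.cast_zero, prod_ite_zero, mem_univ,
    true_imp_iff, prod_const, card_univ, funext_iff, Pi.zero_apply]

lemma card_pow_mul_card_orthogonal_eq_sum (hψ : ψ.IsPrimitive) (hω : ω.IsAlt) (B : Finset V) :
    (Fintype.card F : ℂ) ^ (Fintype.card ι).choose 2 *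
        #{u ∈ Fintype.piFinset fun _ : ι ↦ B | ∀ i j, ω (u i) (u j) = 0} =
      ∑ M : OrderedPair ι → F, ∑ u ∈ Fintype.piFinset fun _ ↦ B, ψ (phase ω M u) := by
  rw [sum_comm, card_filter, Nat.cast_sum, mul_sum]
  refine sum_congr rfl fun u _ ↦ ?_
  have indicator := sum_addChar_dotProduct_eq_ite hψ fun p : OrderedPair ι ↦ ω (u p.1.1) (u p.1.2)
  simp only [phase, indicator, forall_apply_eq_zero_iff hω, card_orderedPair]
  split_ifs <;> simp

lemma BilinearSumBound.card_orthogonal_ge (h : BilinearSumBound ω ψ B T) (hB : B.Nonempty)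
    (hψ : ψ.IsPrimitive) (hω : ω.IsAlt) :
    (1 - (Fintype.card F : ℝ) ^ (Fintype.card ι).choose 2 * T) * (#B : ℝ) ^ Fintype.card ι ≤
      (Fintype.card F : ℝ) ^ (Fintype.card ι).choose 2 *
        #{u ∈ Fintype.piFinset fun _ : ι ↦ B | ∀ i j, ω (u i) (u j) = 0} := by
  set S : (OrderedPair ι → F) → ℂ := fun M ↦ ∑ u ∈ Fintype.piFinset fun _ ↦ B, ψ (phase ω M u)
  set orthCount := #{u ∈ Fintype.piFinset fun _ : ι ↦ B | ∀ i j, ω (u i) (u j) = 0}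
  have T_nonneg : 0 ≤ T := h.nonneg hB
  have S_zero : S 0 = (#B : ℂ) ^ Fintype.card ι := by simp [S, phase]
  have S_sum : S 0 = (Fintype.card F : ℂ) ^ (Fintype.card ι).choose 2 * orthCount -
      ∑ M ∈ univ.erase 0, S M := by
    rw [card_pow_mul_card_orthogonal_eq_sum hψ hω, ← add_sum_erase _ S (mem_univ 0),
      add_sub_cancel_right]
  have nonzero_terms : ‖∑ M ∈ univ.erase 0, S M‖ ≤
      (Fintype.card F : ℝ) ^ (Fintype.card ι).choose 2 * (T * (#B : ℝ) ^ Fintype.card ι) :=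
    calc ‖∑ M ∈ univ.erase 0, S M‖
        ≤ ∑ _M ∈ univ.erase (0 : OrderedPair ι → F), T * (#B : ℝ) ^ Fintype.card ι :=
          (norm_sum_le _ _).trans <| sum_le_sum fun M hM ↦
            h.norm_sum_addChar_phase_le hB hω (ne_of_mem_erase hM)
      _ ≤ ∑ _M : OrderedPair ι → F, T * (#B : ℝ) ^ Fintype.card ι :=
          sum_le_sum_of_subset_of_nonneg (erase_subset _ _) fun _ _ _ ↦ by positivity
      _ = _ := by simp [card_orderedPair]
  have triangle := norm_sub_le
    ((Fintype.card F : ℂ) ^ (Fintype.card ι).choose 2 * orthCount) (∑ M ∈ univ.erase 0, S M)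
  rw [← S_sum, S_zero] at triangle
  simp only [norm_mul, norm_pow, Complex.norm_natCast] at triangle
  linarith

theorem BilinearSumBound.card_linearIndependent_orthogonal_ge (h : BilinearSumBound ω ψ B T)
    (hB : B.Nonempty) (hψ : ψ.IsPrimitive) (hω : ω.IsAlt) :
    (1 - (Fintype.card F : ℝ) ^ (Fintype.card ι).choose 2 *
        (1 + (Fintype.card F : ℝ) ^ Fintype.card ι) * T) * (#B : ℝ) ^ Fintype.card ι ≤
      (Fintype.card F : ℝ) ^ (Fintype.card ι).choose 2 *
        #{u ∈ Fintype.piFinset fun _ : ι ↦ B |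
          LinearIndependent F u ∧ ∀ i j, ω (u i) (u j) = 0} := by
  set tuples := Fintype.piFinset fun _ : ι ↦ B
  have card_dependent_mul_le : (#{u ∈ tuples | ¬LinearIndependent F u} : ℝ) * #B ≤
      (Fintype.card F : ℝ) ^ Fintype.card ι * (#B : ℝ) ^ Fintype.card ι :=
    mod_cast card_filter_not_linearIndependent_mul_card_le B
  set q : ℝ := (Fintype.card F : ℝ)
  have split : #{u ∈ tuples | ∀ i j, ω (u i) (u j) = 0} ≤
      #{u ∈ tuples | LinearIndependent F u ∧ ∀ i j, ω (u i) (u j) = 0} +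
        #{u ∈ tuples | ¬LinearIndependent F u} := by
    refine (card_le_card fun u hu ↦ ?_).trans (card_union_le _ _)
    simp only [mem_union, mem_filter] at hu ⊢
    tauto
  have dependent_le : (#{u ∈ tuples | ¬LinearIndependent F u} : ℝ) ≤
      q ^ Fintype.card ι * T * (#B : ℝ) ^ Fintype.card ι := by
    have T_nonneg : 0 ≤ T := h.nonneg hB
    calc (#{u ∈ tuples | ¬LinearIndependent F u} : ℝ)
        ≤ #{u ∈ tuples | ¬LinearIndependent F u} * (T * #B) :=
          le_mul_of_one_le_right (Nat.cast_nonneg _) (h.one_le_mul_card hB)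
      _ = T * (#{u ∈ tuples | ¬LinearIndependent F u} * #B) := mul_left_comm _ _ _
      _ ≤ T * (q ^ Fintype.card ι * (#B : ℝ) ^ Fintype.card ι) := by gcongr
      _ = _ := by ring
  have split_real : (#{u ∈ tuples | ∀ i j, ω (u i) (u j) = 0} : ℝ) ≤
      #{u ∈ tuples | LinearIndependent F u ∧ ∀ i j, ω (u i) (u j) = 0} +
        q ^ Fintype.card ι * T * (#B : ℝ) ^ Fintype.card ι :=
    (Nat.cast_le.2 split).trans (by push_cast; gcongr)
  linarith [h.card_orthogonal_ge (ι := ι) hB hψ hω,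
    mul_le_mul_of_nonneg_left split_real (by positivity : 0 ≤ q ^ (Fintype.card ι).choose 2)]

end OrthogonalTuples

section SympForm

variable {F : Type} [Field F] {n : ℕ}

/-- The symplectic inner product as a bilinear form. -/
def sympForm (F : Type) [Field F] (n : ℕ) : LinearMap.BilinForm F (Fin n → F × F) :=
  LinearMap.mk₂ F sympInner
    (fun u u' v ↦ by
      simp only [sympInner, ← sum_add_distrib]
      exact sum_congr rfl fun i _ ↦ by simp; ring)
    (fun c u v ↦ by
      simp only [sympInner, smul_eq_mul, mul_sum]
      exact sum_congr rfl fun i _ ↦ by simp; ring)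
    (fun u v v' ↦ by
      simp only [sympInner, ← sum_add_distrib]
      exact sum_congr rfl fun i _ ↦ by simp; ring)
    (fun c u v ↦ by
      simp only [sympInner, smul_eq_mul, mul_sum]
      exact sum_congr rfl fun i _ ↦ by simp; ring)

lemma sympForm_apply (u v : Fin n → F × F) : sympForm F n u v = sympInner u v := rfl

lemma sympForm_isAlt : (sympForm F n).IsAlt := fun u ↦ by
  rw [sympForm_apply]
  exact sum_eq_zero fun i _ ↦ sub_eq_zero.2 (mul_comm _ _)

variable [Fintype F] [DecidableEq F]

lemma sympBall_nonempty (n r : ℕ) : (sympBall F n r).Nonempty :=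
  ⟨0, mem_filter.2 ⟨mem_univ _, by simp [sympWt]⟩⟩

lemma exists_bilinearSumBound_sympBall {ψ : AddChar F ℂ} (hψ : ψ.IsPrimitive) {δ : ℝ}
    (hδ : 0 < δ) :
    ∃ θ : ℝ, 0 < θ ∧ θ < 1 ∧ ∀ n : ℕ, 1 ≤ δ * n →
      BilinearSumBound (sympForm F n) ψ (sympBall F n ⌊δ * n⌋₊) (θ ^ n) := by
  set q : ℝ := (Fintype.card F : ℝ) with hq
  have two_le_q : 2 ≤ q := by rw [hq]; exact_mod_cast Fintype.one_lt_card (α := F)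
  have four_le_q_sq : 4 ≤ q ^ 2 := by nlinarith
  have ratio_pos : 0 < 4 * q ^ 2 / δ := by positivity
  set L : ℝ := 4 * q ^ 2 / δ + q ^ 2
  have loss_pos : 0 < (q ^ 2 - 1) * (q ^ 2 - 2) := mul_pos (by linarith) (by linarith)
  have loss_lt : (q ^ 2 - 1) * (q ^ 2 - 2) < (L + q ^ 2) ^ 2 := by nlinarith
  refine ⟨1 - (q ^ 2 - 1) * (q ^ 2 - 2) / (L + q ^ 2) ^ 2, ?_, ?_, fun n hn a ha w ↦ ?_⟩
  · rw [sub_pos, div_lt_one (by positivity)]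
    exact loss_lt
  · exact sub_lt_self _ (by positivity)
  have half_lt_floor := Nat.div_two_lt_floor hn
  obtain ⟨r, hr⟩ := Nat.exists_eq_succ_of_ne_zero (Nat.floor_pos.2 hn).ne'
  rw [hr, Nat.cast_succ] at half_lt_floor
  rw [hr]
  refine sum_norm_sum_sympBall_addChar_le hψ (by linarith) ?_ ha w
  calc 2 * (q ^ 2 - 1) * n ≤ 2 * q ^ 2 * n := by gcongr; linarith
    _ = 4 * q ^ 2 / δ * (δ * n / 2) := by field_simp; ring
    _ ≤ L * (r + 1) := by gcongr; linarith

end SympForm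

lemma choose_two_add_self_le_sq (ℓ : ℕ) : ℓ.choose 2 + ℓ ≤ ℓ ^ 2 := by
  have := Nat.choose_two_right ℓ ▸ Nat.div_mul_le_self (ℓ * (ℓ - 1)) 2
  rcases ℓ with _ | ℓ
  · simp
  · simp only [Nat.add_sub_cancel] at this
    nlinarith

lemma exists_pow_choose_two_mul_pow_le_rpow {q θ : ℝ} (hq : 2 ≤ q) (hθ₀ : 0 < θ) (hθ₁ : θ < 1) :
    ∃ c : ℝ, 0 < c ∧ ∃ c' : ℝ, 0 < c' ∧ ∃ N : ℕ, ∀ n : ℕ, N ≤ n → ∀ ℓ : ℕ,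
      (ℓ : ℝ) ≤ c' * √n → q ^ ℓ.choose 2 * (1 + q ^ ℓ) * θ ^ n ≤ q ^ (-(c * (n : ℝ))) := by
  have one_lt_q : 1 < q := by linarith
  set t := -Real.logb q θ with ht
  have t_pos : 0 < t := neg_pos.2 (Real.logb_neg one_lt_q hθ₀ hθ₁)
  have θ_eq : θ = q ^ (-t) := by
    rw [ht, neg_neg, Real.rpow_logb (by linarith) one_lt_q.ne' hθ₀]
  refine ⟨t / 4, by positivity, √t / 2, by positivity, ⌈2 / t⌉₊, fun n hn ℓ hℓ ↦ ?_⟩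
  have two_le : 2 ≤ t * n := by
    rw [mul_comm, ← div_le_iff₀ t_pos]
    exact Nat.ceil_le.1 hn
  have sq_le : (ℓ : ℝ) ^ 2 ≤ t * n / 4 :=
    calc (ℓ : ℝ) ^ 2 ≤ (√t / 2 * √n) ^ 2 := by gcongr
      _ = t * n / 4 := by
        rw [mul_pow, div_pow, Real.sq_sqrt t_pos.le, Real.sq_sqrt n.cast_nonneg]
        ring
  have choose_le : (ℓ.choose 2 : ℝ) + ℓ ≤ (ℓ : ℝ) ^ 2 := mod_cast choose_two_add_self_le_sq ℓ
  have one_add_pow_le : 1 + q ^ ℓ ≤ q ^ (ℓ + 1) := by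
    rw [pow_succ]
    nlinarith [one_le_pow₀ one_lt_q.le (n := ℓ)]
  calc q ^ ℓ.choose 2 * (1 + q ^ ℓ) * θ ^ n
      ≤ q ^ ℓ.choose 2 * q ^ (ℓ + 1) * θ ^ n := by gcongr
    _ = q ^ ((ℓ.choose 2 : ℝ) + ℓ + 1 + -t * n) := by
      rw [θ_eq, ← Real.rpow_mul_natCast (by linarith), ← pow_add, ← Real.rpow_natCast,
        ← Real.rpow_add (by linarith)]
      push_cast
      ring_nf
    _ ≤ q ^ (-(t / 4 * (n : ℝ))) := Real.rpow_le_rpow_of_exponent_le one_lt_q.le (by linarith)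

theorem symp_orth_tuple_count_lower_bound_general
    (q : ℕ) (F : Type) [Field F] [Fintype F] [DecidableEq F] (hF : Fintype.card F = q)
    (δ : ℝ) (hδ0 : 0 < δ) :
    ∃ c : ℝ, 0 < c ∧ ∃ c'' : ℝ, 0 < c'' ∧ ∃ N : ℕ, ∀ n : ℕ, N ≤ n →
      ∀ ℓ : ℕ, (ℓ : ℝ) ≤ c'' * Real.sqrt n →
        (1 - (q : ℝ) ^ (-(c * (n : ℝ)))) * (volS q n ⌊δ * (n : ℝ)⌋₊ : ℝ) ^ ℓ /
            (q : ℝ) ^ (ℓ * (ℓ - 1) / 2) ≤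
          (((Finset.univ : Finset (Fin ℓ → Fin n → F × F)).filter fun u =>
              (∀ i, u i ∈ sympBall F n ⌊δ * (n : ℝ)⌋₊) ∧ LinearIndependent F u ∧
                ∀ i j, sympInner (u i) (u j) = 0).card : ℝ) := by
  subst hF
  have hψ := AddChar.FiniteField.primitiveChar_to_Complex_isPrimitive F
  obtain ⟨θ, hθ₀, hθ₁, sum_bound⟩ := exists_bilinearSumBound_sympBall hψ hδ0
  obtain ⟨c, hc, c', hc', N, error_le⟩ := exists_pow_choose_two_mul_pow_le_rpow
    (Nat.ofNat_le_cast.2 (Fintype.one_lt_card (α := F))) hθ₀ hθ₁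
  refine ⟨c, hc, c', hc', max N ⌈1 / δ⌉₊, fun n hn ℓ hℓ ↦ ?_⟩
  have one_le : 1 ≤ δ * n := by
    rw [← div_le_iff₀' hδ0]
    exact Nat.ceil_le.1 (le_of_max_le_right hn)
  have count := (sum_bound n one_le).card_linearIndependent_orthogonal_ge (ι := Fin ℓ)
    (sympBall_nonempty n _) hψ sympForm_isAlt
  rw [Fintype.card_fin, card_sympBall] at count
  rw [← Nat.choose_two_right, div_le_iff₀' (by positivity)]
  calc (1 - (Fintype.card F : ℝ) ^ (-(c * (n : ℝ)))) *
          (volS (Fintype.card F) n ⌊δ * (n : ℝ)⌋₊ : ℝ) ^ ℓ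
      ≤ _ := by gcongr; exact error_le n (le_of_max_le_left hn) ℓ hℓ
    _ ≤ _ := count
    _ = _ := by
      congr 3
      -- the two filters carry different decidability instances, hence the explicit `(_)`
      refine Finset.ext fun u ↦ (@mem_filter _ _ (_) _ _).trans ?_
      rw [Fintype.mem_piFinset, mem_filter_univ]
      rfl

/-- For a prime power `q` (realized as the cardinality of a finite field `F`)
and a constant `δ ∈ (0, 1 - 1/q²)`, there exist `c > 0` and `c'' > 0` such that for all
sufficiently large `n`, with `d - 1 = ⌊δn⌋`: for every `ℓ` with `1 ≤ ℓ ≤ c''√n`, the number of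
linearly independent pairwise symplectically orthogonal `ℓ`-tuples of vectors of
`B_q^S(2n, d-1)` is at least `(1 - q^{-cn}) · Vol_q^S(2n,d-1)^ℓ / q^{ℓ(ℓ-1)/2}`. -/
theorem symp_orth_tuple_count_lower_bound
    (q : ℕ) (F : Type) [Field F] [Fintype F] [DecidableEq F] (hF : Fintype.card F = q)
    (δ : ℝ) (hδ0 : 0 < δ) (hδ : δ < 1 - 1 / (q : ℝ) ^ 2) :
    ∃ c : ℝ, 0 < c ∧ ∃ c'' : ℝ, 0 < c'' ∧ ∃ N : ℕ, ∀ n : ℕ, N ≤ n →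
      ∀ ℓ : ℕ, 1 ≤ ℓ → (ℓ : ℝ) ≤ c'' * Real.sqrt n →
        (1 - (q : ℝ) ^ (-(c * (n : ℝ)))) * (volS q n ⌊δ * (n : ℝ)⌋₊ : ℝ) ^ ℓ /
            (q : ℝ) ^ (ℓ * (ℓ - 1) / 2) ≤
          (((Finset.univ : Finset (Fin ℓ → Fin n → F × F)).filter fun u =>
              (∀ i, u i ∈ sympBall F n ⌊δ * (n : ℝ)⌋₊) ∧ LinearIndependent F u ∧
                ∀ i j, sympInner (u i) (u j) = 0).card : ℝ) := by
  obtain ⟨c, hc, c'', hc'', N, h⟩ := symp_orth_tuple_count_lower_bound_general q F hF δ hδ0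
  exact ⟨c, hc, c'', hc'', N, fun n hn ℓ _ ↦ h n hn ℓ⟩
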